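/- Let n ≥ 2 and let G be an almost controllable graph on Fin n with twins τ < τ′ such that the (τ,n)-cofactor of W(G) equals ±2^{⌊n/2⌋−1}·b for an odd, square-free, positive integer b. Let p be an odd prime dividing b and let β ∈ 𝔽_pⁿ be any nonzero vector with Ŵ(G)ᵀβ = 0 over 𝔽_p. Then there exists λ₀ ∈ 𝔽_p such that A(G)·β = λ₀·β over 𝔽_p. -/

import Mathlib

/-!
Write `K = ZMod p`. Since rows `τ` and `τ'` of the walk matrix agree, subtracting one from the
other in `Ŵ` and expanding along the resulting row gives `det Ŵ = -2 · cofactorLast A τ`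
(`det_hatW`), which is not divisible by `p²` because `p` is odd and `b` is square-free. An integer matrix with that property has some
adjugate entry that is nonzero mod `p` (`exists_adjugate_not_dvd`), so its kernel over `K` is at
most one-dimensional (`eq_smul_of_adjugate_ne_zero`). It remains to see that `Aβ` lies in the
kernel of `Ŵᵀ` along with `β`. Orthogonality to `α` says that the entries at `τ` and `τ'` agree,
and the space of such vectors is `A`-invariant (`twin_invariant`). Orthogonality of `Aβ` to `A^k e`
is that of `β` to `A^(k+1) e`; only the top power `A^(n+1) e` is not covered by hypothesis.
That vector is a combination of the lower powers by Cayley–Hamilton for the restriction of `A` to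
the `(n+1)`-dimensional space of vectors with equal entries at `τ` and `τ'`, which contains `e`.
-/

open Matrix

namespace AlmostControllableGraphs

variable {n : ℕ}

/-- The all-ones vector. -/
def eVec (m : ℕ) : Fin m → ℤ := fun _ => 1

/-- The walk matrix `W(G) = [e, Ae, A²e, …, A^{n-1}e]` (columns indexed by `Fin (n+2)`). -/
def walkMatrix (A : Matrix (Fin (n + 2)) (Fin (n + 2)) ℤ) :
    Matrix (Fin (n + 2)) (Fin (n + 2)) ℤ :=
  Matrix.of fun i j => ((A ^ (j : ℕ)) *ᵥ eVec (n + 2)) i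

/-- `G` is almost controllable if its walk matrix has rank `n - 1` over `ℚ`. -/
def IsAlmostControllable (A : Matrix (Fin (n + 2)) (Fin (n + 2)) ℤ) : Prop :=
  ((walkMatrix A).map ((↑) : ℤ → ℚ)).rank = n + 1

/-- The matrix `V = [e, Ae, …, A^{n-2}e]`, the first `n - 1` columns of the walk matrix. -/
def Vmat (A : Matrix (Fin (n + 2)) (Fin (n + 2)) ℤ) :
    Matrix (Fin (n + 2)) (Fin (n + 1)) ℤ :=
  Matrix.of fun i j => walkMatrix A i j.castSucc

/-- The matrix obtained from `V` by deleting row `i`. -/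
def Xmat (A : Matrix (Fin (n + 2)) (Fin (n + 2)) ℤ) (i : Fin (n + 2)) :
    Matrix (Fin (n + 1)) (Fin (n + 1)) ℤ :=
  Matrix.of fun r c => Vmat A (i.succAbove r) c

/-- The `(i, n)`-cofactor of the walk matrix: `(−1)^{n+i}` times the determinant of the
matrix obtained by deleting row `i` and the last column from `W(G)`.
(In 0-based indexing the sign is `(−1)^{i + (n-1)}`.) -/
def cofactorLast (A : Matrix (Fin (n + 2)) (Fin (n + 2)) ℤ) (i : Fin (n + 2)) : ℤ :=
  (-1 : ℤ) ^ ((i : ℕ) + (n + 1)) * (Xmat A i).det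

/-- The vector `ξ(G)` of last-column cofactors of the walk matrix. -/
def xiVec (A : Matrix (Fin (n + 2)) (Fin (n + 2)) ℤ) : Fin (n + 2) → ℤ :=
  fun i => cofactorLast A i

/-- The rational scalar `2^{1 - ⌊n/2⌋}`. -/
def twoPow (n : ℕ) : ℚ := (2 : ℚ) ^ ((1 : ℤ) - (((n + 2) / 2 : ℕ) : ℤ))

/-- The matrix `W_δ(G) = [e, Ae, …, A^{n-2}e, (−1)^δ·2^{1-⌊n/2⌋}·ξ(G)]`. -/
def Wdelta (A : Matrix (Fin (n + 2)) (Fin (n + 2)) ℤ) (δ : ℕ) :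
    Matrix (Fin (n + 2)) (Fin (n + 2)) ℚ :=
  Matrix.of fun i j =>
    if (j : ℕ) = n + 1 then (-1 : ℚ) ^ δ * twoPow n * (xiVec A i : ℚ)
    else ((walkMatrix A i j : ℤ) : ℚ)

/-- A matrix is regular orthogonal if it is orthogonal and has all row sums equal to 1. -/
def IsRegularOrthogonal {K : Type*} [Field K] {m : ℕ} (Q : Matrix (Fin m) (Fin m) K) : Prop :=
  Qᵀ * Q = 1 ∧ Q *ᵥ (fun _ => (1 : K)) = fun _ => 1

/-- Adjacency matrix of the complement graph. -/
def complMat (A : Matrix (Fin (n + 2)) (Fin (n + 2)) ℤ) :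
    Matrix (Fin (n + 2)) (Fin (n + 2)) ℤ :=
  Matrix.of fun i j => if i = j then 0 else 1 - A i j

/-- Two graphs are generalized cospectral if they are cospectral and so are their complements. -/
def GenCospectral (A B : Matrix (Fin (n + 2)) (Fin (n + 2)) ℤ) : Prop :=
  A.charpoly = B.charpoly ∧ (complMat A).charpoly = (complMat B).charpoly

/-- `τ` and `τ'` are twins: the transposition swapping them is an automorphism. -/
def IsTwinPair (A : Matrix (Fin (n + 2)) (Fin (n + 2)) ℤ) (τ τ' : Fin (n + 2)) : Prop :=
  ∀ i j, A (Equiv.swap τ τ' i) (Equiv.swap τ τ' j) = A i j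

/-- `λ₁(G) = −1` if the twins are adjacent and `0` otherwise; for a 0-1 matrix this
is `−A τ τ'`. -/
def lam1 (A : Matrix (Fin (n + 2)) (Fin (n + 2)) ℤ) (τ τ' : Fin (n + 2)) : ℤ :=
  -(A τ τ')

/-- The vector `α(G)` with entry `−1` at `τ`, `1` at `τ'`, and `0` elsewhere. -/
def alphaVec (τ τ' : Fin (n + 2)) : Fin (n + 2) → ℤ :=
  fun i => if i = τ then -1 else if i = τ' then 1 else 0

/-- The reduction of `α(G)` modulo `p`. -/
def alphaVecMod (p : ℕ) (τ τ' : Fin (n + 2)) : Fin (n + 2) → ZMod p :=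
  fun i => ((alphaVec τ τ' i : ℤ) : ZMod p)

/-- The matrix `Ŵ(G) = [e, Ae, …, A^{n-2}e, α(G)]`. -/
def hatW (A : Matrix (Fin (n + 2)) (Fin (n + 2)) ℤ) (τ τ' : Fin (n + 2)) :
    Matrix (Fin (n + 2)) (Fin (n + 2)) ℤ :=
  Matrix.of fun i j => if (j : ℕ) = n + 1 then alphaVec τ τ' i else walkMatrix A i j

/-- The level of a rational matrix: the smallest positive integer `ℓ` such that `ℓQ` is
an integer matrix. -/
noncomputable def level {m : ℕ} (Q : Matrix (Fin m) (Fin m) ℚ) : ℕ :=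
  sInf {k : ℕ | 0 < k ∧ ∀ i j, ((k : ℚ) * Q i j).den = 1}

/-- A permutation matrix. -/
def IsPermMatrix {m : ℕ} (Q : Matrix (Fin m) (Fin m) ℚ) : Prop :=
  ∃ σ : Equiv.Perm (Fin m), ∀ i j, Q i j = if σ i = j then 1 else 0

/-- `G` is determined by its generalized spectrum: every graph generalized cospectral with
`G` is isomorphic to `G`. -/
def IsDGS (A : Matrix (Fin (n + 2)) (Fin (n + 2)) ℤ) : Prop :=
  ∀ B : Matrix (Fin (n + 2)) (Fin (n + 2)) ℤ, B.IsAdjMatrix → GenCospectral A B →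
    ∃ σ : Equiv.Perm (Fin (n + 2)), ∀ i j, B i j = A (σ i) (σ j)


/-- An integer matrix whose determinant is not divisible by `p²` has corank at most one mod `p`:
otherwise `p ^ (m+1)` would divide `det (adjugate M) = det M ^ m`. -/
lemma exists_adjugate_not_dvd {m p : ℕ} (hp : p.Prime)
    (M : Matrix (Fin (m + 1)) (Fin (m + 1)) ℤ) (h : ¬ (p : ℤ) ^ 2 ∣ M.det) :
    ∃ i j, ¬ (p : ℤ) ∣ M.adjugate i j := by
  by_contra! hall
  have hpi : Prime (p : ℤ) := Nat.prime_iff_prime_int.mp hp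
  choose B hB using hall
  have hadj : M.adjugate = (p : ℤ) • (Matrix.of B) := by
    ext i j
    simp [hB i j]
  have hdet : (p : ℤ) ^ (m + 1) * (Matrix.of B).det = M.det ^ m := by
    have h1 := M.det_adjugate
    rw [hadj, det_smul] at h1
    simpa using h1
  have hd : (p : ℤ) ∣ M.det := by
    apply hpi.dvd_of_dvd_pow (n := m)
    rw [← hdet, pow_succ, mul_assoc]
    exact Dvd.dvd.mul_left (dvd_mul_right _ _) _
  obtain ⟨d, hd⟩ := hd
  rw [hd, mul_pow, pow_succ, mul_assoc] at hdet
  have h2 := mul_left_cancel₀ (pow_ne_zero m hpi.ne_zero) hdet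
  have h3 : (p : ℤ) ∣ d := hpi.dvd_of_dvd_pow (n := m) ⟨_, h2.symm⟩
  apply h
  rw [hd, pow_two]
  exact mul_dvd_mul_left _ h3

/-- If some adjugate entry is nonzero, replacing a row of `M` by a standard basis row gives an
invertible matrix, so a kernel vector is determined by a single coordinate. -/
lemma eq_smul_of_adjugate_ne_zero {K : Type*} [Field K] {m : ℕ}
    (M : Matrix (Fin m) (Fin m) K) {i j : Fin m} (h : M.adjugate i j ≠ 0)
    {x y : Fin m → K} (hx0 : x ≠ 0) (hx : M *ᵥ x = 0) (hy : M *ᵥ y = 0) :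
    ∃ c : K, y = c • x := by
  rw [adjugate_apply] at h
  have key : ∀ z : Fin m → K, M *ᵥ z = 0 → z i = 0 → z = 0 := by
    intro z hz hzi
    refine eq_zero_of_mulVec_eq_zero h ?_
    ext k
    by_cases hk : k = j
    · subst hk
      simp [mulVec, hzi]
    · have := congrFun hz k
      simpa [mulVec, updateRow_ne hk] using this
  have hxi : x i ≠ 0 := fun hxi => hx0 (key x hx hxi)
  refine ⟨y i / x i, sub_eq_zero.mp (key _ ?_ ?_)⟩
  · rw [mulVec_sub, mulVec_smul, hx, hy]
    simp
  · simp [hxi]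

/-- By Cayley–Hamilton, a functional vanishing on the first `finrank K V` iterates of a vector
vanishes on the next one. -/
lemma dual_pow_finrank_eq_zero {K V : Type*} [Field K] [AddCommGroup V] [Module K V]
    [FiniteDimensional K V] (f : Module.End K V) (φ : V →ₗ[K] K) (v : V) (N : ℕ)
    (hN : Module.finrank K V = N) (h : ∀ k < N, φ ((f ^ k) v) = 0) : φ ((f ^ N) v) = 0 := by
  have hdeg : f.charpoly.natDegree = N := by rw [LinearMap.charpoly_natDegree, hN]
  have h1 := f.aeval_self_charpoly
  rw [Polynomial.aeval_eq_sum_range, hdeg, Finset.sum_range_succ] at h1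
  have hc : f.charpoly.coeff N = 1 := by
    rw [← hdeg]
    exact f.charpoly_monic
  have h2 := congrArg (fun g : Module.End K V => φ (g v)) h1
  simp only [hc, one_smul, LinearMap.add_apply, LinearMap.sum_apply, LinearMap.smul_apply,
    map_add, map_sum, map_smul, LinearMap.zero_apply, map_zero] at h2
  rwa [Finset.sum_eq_zero, zero_add] at h2
  intro k hk
  rw [h k (Finset.mem_range.mp hk), smul_zero]

/-- Multiplication by `A` commutes with the swap of twins, so it preserves the vectors fixed
by the swap. -/
lemma twin_invariant {R : Type*} [CommRing R] {A : Matrix (Fin (n + 2)) (Fin (n + 2)) ℤ}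
    {τ τ' : Fin (n + 2)} (htw : IsTwinPair A τ τ') (v : Fin (n + 2) → R) (hv : v τ = v τ') :
    (A.map ((↑) : ℤ → R) *ᵥ v) τ = (A.map ((↑) : ℤ → R) *ᵥ v) τ' := by
  have hs : ∀ j, v (Equiv.swap τ τ' j) = v j := by
    intro j
    rw [Equiv.swap_apply_def]
    split_ifs with h1 h2
    · rw [h1, hv]
    · rw [h2, hv]
    · rfl
  simp only [mulVec, dotProduct, map_apply]
  rw [← Equiv.sum_comp (Equiv.swap τ τ')]
  refine Finset.sum_congr rfl fun j _ => ?_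
  rw [hs, ← htw τ' j, Equiv.swap_apply_right]

lemma twin_pow_invariant {R : Type*} [CommRing R] {A : Matrix (Fin (n + 2)) (Fin (n + 2)) ℤ}
    {τ τ' : Fin (n + 2)} (htw : IsTwinPair A τ τ') (v : Fin (n + 2) → R) (hv : v τ = v τ')
    (k : ℕ) :
    (A.map ((↑) : ℤ → R) ^ k *ᵥ v) τ = (A.map ((↑) : ℤ → R) ^ k *ᵥ v) τ' := by
  induction k with
  | zero => simpa using hv
  | succ k ih =>
    rw [pow_succ', ← mulVec_mulVec]
    exact twin_invariant htw _ ih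

lemma det_hatW {A : Matrix (Fin (n + 2)) (Fin (n + 2)) ℤ}
    {τ τ' : Fin (n + 2)} (hne : τ ≠ τ') (htw : IsTwinPair A τ τ') :
    (hatW A τ τ').det = -2 * cofactorLast A τ := by
  have hrow : ∀ j : Fin (n + 2), walkMatrix A τ j = walkMatrix A τ' j := by
    intro j
    have := twin_pow_invariant (R := ℤ) htw (eVec (n + 2)) rfl j
    rw [show A.map (Int.cast : ℤ → ℤ) = A from by ext; simp] at this
    simpa [walkMatrix] using this
  rw [← det_updateRow_add_smul_self (hatW A τ τ') hne (-1), det_succ_row _ τ,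
    Fin.sum_univ_castSucc]
  -- All entries of the modified row vanish except the last one, which is `-2`.
  have hz : ∀ j : Fin (n + 1), hatW A τ τ' τ j.castSucc = hatW A τ τ' τ' j.castSucc := by
    intro j
    have hj : (j : ℕ) ≠ n + 1 := j.isLt.ne
    simp [hatW, hj, hrow]
  have hsub : ((hatW A τ τ').updateRow τ
      ((hatW A τ τ') τ + (-1 : ℤ) • (hatW A τ τ') τ')).submatrix τ.succAbove
      (Fin.last (n + 1)).succAbove = Xmat A τ := by
    ext r c
    have hc : (c : ℕ) ≠ n + 1 := c.isLt.ne
    simp [hatW, Xmat, Vmat, updateRow_ne, Fin.succAbove_ne, hc]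
  rw [Finset.sum_eq_zero, hsub]
  · simp [hatW, alphaVec, hne.symm, cofactorLast]
    ring
  · intro j _
    simp [hz]

/-- `β` is an eigenvector of `A(G)` over `𝔽_p`. -/
theorem beta_is_eigenvector_mod_p
    (n : ℕ) (A : Matrix (Fin (n + 2)) (Fin (n + 2)) ℤ)
    (hA : A.IsAdjMatrix) (hac : IsAlmostControllable A)
    (τ τ' : Fin (n + 2)) (hlt : τ < τ') (htw : IsTwinPair A τ τ')
    (b : ℤ) (hodd : Odd b) (hsf : Squarefree b) (hpos : 0 < b)
    (hcof : cofactorLast A τ = 2 ^ ((n + 2) / 2 - 1) * b ∨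
            cofactorLast A τ = -(2 ^ ((n + 2) / 2 - 1) * b))
    (p : ℕ) (hp : p.Prime) (hp2 : p ≠ 2) (hdvd : (p : ℤ) ∣ b)
    (β : Fin (n + 2) → ZMod p) (hβ : β ≠ 0)
    (hβW : ((hatW A τ τ').map ((↑) : ℤ → ZMod p))ᵀ *ᵥ β = 0) :
    ∃ lam0 : ZMod p, (A.map ((↑) : ℤ → ZMod p)) *ᵥ β = lam0 • β := by
  have : Fact p.Prime := ⟨hp⟩
  have hpi : Prime (p : ℤ) := Nat.prime_iff_prime_int.mp hp
  set B : Matrix (Fin (n + 2)) (Fin (n + 2)) (ZMod p) := A.map ((↑) : ℤ → ZMod p) with hB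
  set e : Fin (n + 2) → ZMod p := fun _ => 1 with he
  have hBsymm : Bᵀ = B := by
    rw [hB, ← transpose_map, hA.symm.eq]
  have hwalk : ∀ k (i : Fin (n + 2)), (((A ^ k *ᵥ eVec (n + 2)) i : ℤ) : ZMod p)
      = (B ^ k *ᵥ e) i := by
    intro k i
    have h1 := RingHom.map_mulVec (Int.castRingHom (ZMod p)) (A ^ k) (eVec (n + 2)) i
    rw [Matrix.map_pow] at h1
    have h2 : (⇑(Int.castRingHom (ZMod p)) ∘ eVec (n + 2)) = e := by
      ext; simp [eVec, he]
    rw [h2] at h1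
    exact h1
  -- The kernel of `Ŵᵀ` consists of vectors orthogonal to the walk vectors and to `α`.
  have hker : ∀ x : Fin (n + 2) → ZMod p,
      ((hatW A τ τ').map ((↑) : ℤ → ZMod p))ᵀ *ᵥ x = 0 ↔
        (∀ k < n + 1, (B ^ k *ᵥ e) ⬝ᵥ x = 0) ∧ x τ = x τ' := by
    intro x
    have hα : (∑ i, ((alphaVec τ τ' i : ℤ) : ZMod p) * x i) = x τ' - x τ := by
      have hsplit : ∀ i, ((alphaVec τ τ' i : ℤ) : ZMod p) * x i =
          (if i = τ' then x i else 0) - (if i = τ then x i else 0) := by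
        intro i
        have hne := hlt.ne
        unfold alphaVec
        split_ifs with h1 h2
        · exact absurd (h1.symm.trans h2) hne
        all_goals simp
      simp [hsplit]
    have hlast : (((hatW A τ τ').map ((↑) : ℤ → ZMod p))ᵀ *ᵥ x) (Fin.last (n + 1))
        = x τ' - x τ := by
      rw [← hα]
      simp [mulVec, dotProduct, hatW]
    have hcs : ∀ k : Fin (n + 1),
        (((hatW A τ τ').map ((↑) : ℤ → ZMod p))ᵀ *ᵥ x) k.castSucc = (B ^ (k : ℕ) *ᵥ e) ⬝ᵥ x := by
      intro k
      have hk : (k : ℕ) ≠ n + 1 := k.isLt.ne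
      simp only [mulVec, dotProduct, transpose_apply, map_apply]
      refine Finset.sum_congr rfl fun i _ => ?_
      have := hwalk k i
      simp only [mulVec, dotProduct] at this
      rw [← this]
      simp [hatW, hk, walkMatrix, mulVec, dotProduct]
    constructor
    · intro h
      refine ⟨fun k hk => ?_, ?_⟩
      · rw [← hcs ⟨k, hk⟩, h]; rfl
      · rw [h] at hlast
        exact (sub_eq_zero.mp hlast.symm).symm
    · rintro ⟨h1, h2⟩
      ext j
      refine Fin.lastCases ?_ (fun k => ?_) j
      · rw [hlast, h2]; simp
      · rw [hcs, h1 k k.isLt]; rfl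
  obtain ⟨hβk, hβτ⟩ := (hker β).mp hβW
  -- Cayley–Hamilton on the invariant hyperplane `ker ℓ` of vectors with equal entries at the twins.
  have htop : (B ^ (n + 1) *ᵥ e) ⬝ᵥ β = 0 := by
    let ℓ : Module.Dual (ZMod p) (Fin (n + 2) → ZMod p) :=
      (LinearMap.proj τ : (Fin (n + 2) → ZMod p) →ₗ[ZMod p] ZMod p) - LinearMap.proj τ'
    have hℓ : ℓ ≠ 0 := by
      intro h0
      have := LinearMap.congr_fun h0 (Pi.single τ 1)
      simp [ℓ, hlt.ne'] at this
    have hmem : ∀ v, v ∈ LinearMap.ker ℓ ↔ v τ = v τ' := by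
      intro v
      simp [ℓ, sub_eq_zero]
    have hinv : ∀ v ∈ LinearMap.ker ℓ, (toLin' B) v ∈ LinearMap.ker ℓ := by
      intro v hv
      rw [hmem] at hv ⊢
      exact twin_invariant htw v hv
    have hfin : Module.finrank (ZMod p) (LinearMap.ker ℓ) = n + 1 := by
      have := Module.Dual.finrank_ker_add_one_of_ne_zero hℓ
      simpa using this
    let f := (toLin' B).restrict hinv
    let φ : LinearMap.ker ℓ →ₗ[ZMod p] ZMod p :=
      (dotProductBilin (ZMod p) (ZMod p) |>.flip β) ∘ₗ (LinearMap.ker ℓ).subtype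
    let v : LinearMap.ker ℓ := ⟨e, (hmem e).mpr rfl⟩
    have hφ : ∀ k, φ ((f ^ k) v) = (B ^ k *ᵥ e) ⬝ᵥ β := by
      intro k
      have hk : (((f ^ k) v : LinearMap.ker ℓ) : Fin (n + 2) → ZMod p) = B ^ k *ᵥ e := by
        rw [Module.End.pow_restrict, LinearMap.coe_restrict_apply, ← toLin'_pow, toLin'_apply]
      change (((f ^ k) v : LinearMap.ker ℓ) : Fin (n + 2) → ZMod p) ⬝ᵥ β = _
      rw [hk]
    rw [← hφ]
    exact dual_pow_finrank_eq_zero f φ v (n + 1) hfin fun k hk => by rw [hφ, hβk k hk]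
  have hAβ : ((hatW A τ τ').map ((↑) : ℤ → ZMod p))ᵀ *ᵥ (B *ᵥ β) = 0 := by
    rw [hker]
    refine ⟨fun k hk => ?_, twin_invariant htw β hβτ⟩
    have hshift : (B ^ k *ᵥ e) ⬝ᵥ (B *ᵥ β) = (B ^ (k + 1) *ᵥ e) ⬝ᵥ β := by
      rw [dotProduct_mulVec, ← mulVec_transpose, hBsymm, mulVec_mulVec, ← pow_succ']
    rw [hshift]
    rcases Nat.lt_or_ge (k + 1) (n + 1) with h | h
    · exact hβk _ h
    · rw [show k + 1 = n + 1 by omega]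
      exact htop
  have hdet : ¬ (p : ℤ) ^ 2 ∣ (hatW A τ τ')ᵀ.det := by
    rw [det_transpose, det_hatW hlt.ne htw]
    have hp2' : ¬ (p : ℤ) ∣ 2 := by
      intro h
      exact hp2 ((Nat.prime_dvd_prime_iff_eq hp Nat.prime_two).mp (by exact_mod_cast h))
    have hb : ¬ (p : ℤ) ^ 2 ∣ b := by
      intro h
      rw [pow_two] at h
      exact hpi.not_isUnit (hsf _ h)
    intro h
    have h2 : (p : ℤ) ^ 2 ∣ 2 ^ ((n + 2) / 2 - 1 + 1) * b := by
      rw [pow_succ]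
      rcases hcof with hc | hc <;> rw [hc] at h
      · rw [← dvd_neg]
        exact (by ring : -2 * (2 ^ ((n + 2) / 2 - 1) * b) = -(2 ^ ((n + 2) / 2 - 1) * 2 * b)) ▸ h
      · exact (by ring : -2 * -(2 ^ ((n + 2) / 2 - 1) * b) = 2 ^ ((n + 2) / 2 - 1) * 2 * b) ▸ h
    have hcop : IsCoprime ((p : ℤ) ^ 2) (2 ^ ((n + 2) / 2 - 1 + 1)) :=
      ((hpi.coprime_iff_not_dvd).mpr hp2').pow
    exact hb (hcop.dvd_of_dvd_mul_left h2)
  obtain ⟨i, j, hij⟩ := exists_adjugate_not_dvd hp _ hdet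
  have hadj : (((hatW A τ τ').map ((↑) : ℤ → ZMod p))ᵀ).adjugate i j ≠ 0 := by
    intro h0
    apply hij
    rw [← ZMod.intCast_zmod_eq_zero_iff_dvd, ← h0]
    have := (Int.castRingHom (ZMod p)).map_adjugate (hatW A τ τ')ᵀ
    exact congrFun (congrFun this i) j
  exact eq_smul_of_adjugate_ne_zero _ hadj hβ hβW hAβ

end AlmostControllableGraphs
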